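/- For every real c with 0 < c < 1, the limit as n → ∞ of log₂|𝒮(n,c)| / C(n,2) exists and equals h(c), where C(n,2) = n(n−1)/2. -/

import Mathlib

/-!
In a graph with a generalised clique partition everything except the edges between the first part
`A` and the rest is determined by the partition, and there are only `2^{O(n log n)}` partitions.
There are at most `Q = ⌊n/2⌋⌈n/2⌉ ~ C(n,2)/2` pairs across `(A, Aᶜ)`. The class is closed under
complements, and `h(1 - c) = h(c)`, so it is enough to treat `c ≥ 1/2` (`tendsto_splitCount`), for
an arbitrary sequence of edge counts `m` with `m / C(n,2) → c`.

* Upper bound (`splitCount_le`): the number of graphs is at most `2^{O(n log n)}` times the number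
  of subsets of a `Q`-set of size at most the number of edges. This is at most `2^Q`, which settles
  `c ≤ 3/4`. For `c > 3/4`, passing to complements bounds the size by `k = C(n,2) - m < Q/2`, and
  the number of subsets by `(k + 1) C(Q, k)`.
* Lower bound (`choose_le_splitCount_of_le`): take `|A| = ⌊n/2⌋`, a clique on `A`, a clique on a set
  `T` of `t` other vertices, and any `e = m - C(|A|,2) - C(t,2)` of the `Q` cross pairs. For
  `c ≤ 3/4`, `t` can be chosen with `e ~ Q/2`; for `c > 3/4`, `T = Aᶜ` gives `e ~ (2c - 1) Q`.

Both bounds are evaluated with `log₂ C(M, k) = M · H(k/M) + O(log M)` (`logb_choose_bounds`).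
-/

open Finset SimpleGraph
open scoped Classical

/-- Binary entropy with base-2 logarithm. -/
noncomputable def binEnt (x : ℝ) : ℝ := -(x * Real.logb 2 x) - (1 - x) * Real.logb 2 (1 - x)

/-- The function `h(c)` from the paper. -/
noncomputable def hfun (c : ℝ) : ℝ :=
  if c < 1/4 then binEnt (2*c) / 2
  else if c ≤ 3/4 then 1/2
  else binEnt (2*c - 1) / 2
/-- Number of edges of a graph. -/
noncomputable def edgeCount {V : Type} (G : SimpleGraph V) : ℕ := Nat.card G.edgeSet
/-- `G` admits a generalised clique partition: a partition `V = V₁ ∪ … ∪ V_k` (here encoded by a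
labelling `f` of the vertices, part `0` playing the role of `V₁`) such that every part induces a
clique and there are no edges between two distinct parts other than the first. -/
def HasGenCliquePartition {V : Type} (G : SimpleGraph V) : Prop :=
  ∃ f : V → ℕ,
    (∀ u v, f u = f v → u ≠ v → G.Adj u v) ∧
    (∀ u v, f u ≠ f v → f u ≠ 0 → f v ≠ 0 → ¬ G.Adj u v)

/-- `G` is a generalised split graph: `G` or its complement admits a generalised clique
partition. -/
def IsGenSplit {V : Type} (G : SimpleGraph V) : Prop :=
  HasGenCliquePartition G ∨ HasGenCliquePartition Gᶜ

/-- `𝒮(n,c)`: the generalised split graphs on vertex set `{1,…,n}` with exactly `⌊c·C(n,2)⌋`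
edges. -/
noncomputable def Sset (n : ℕ) (c : ℝ) : Finset (SimpleGraph (Fin n)) :=
  univ.filter fun G => IsGenSplit G ∧ edgeCount G = ⌊c * (n.choose 2 : ℝ)⌋₊

/-! ### Binomial coefficients and entropy -/

theorem binTerm_le_succ {k l j : ℕ} (hj : j < k) :
    (k + l).choose j * k ^ j * l ^ (k + l - j)
      ≤ (k + l).choose (j + 1) * k ^ (j + 1) * l ^ (k + l - (j + 1)) := by
  obtain ⟨d, hd⟩ : ∃ d, k + l - j = d + 1 := ⟨k + l - j - 1, by omega⟩
  have hd' : k + l - (j + 1) = d := by omega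
  have h1 := Nat.choose_succ_right_eq (k + l) j
  rw [hd, hd']
  rw [hd] at h1
  have h2 : (k + l).choose j * l ≤ (k + l).choose (j + 1) * k := by
    refine Nat.le_of_mul_le_mul_right ?_ (Nat.succ_pos j)
    calc (k + l).choose j * l * (j + 1) ≤ (k + l).choose j * (d + 1) * k := by
          rw [mul_assoc, mul_assoc]
          exact Nat.mul_le_mul_left _ (Nat.mul_le_mul (by omega) (by omega))
      _ = (k + l).choose (j + 1) * k * (j + 1) := by rw [← h1]; ring
  calc (k + l).choose j * k ^ j * l ^ (d + 1) = ((k + l).choose j * l) * (k ^ j * l ^ d) := by ring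
    _ ≤ ((k + l).choose (j + 1) * k) * (k ^ j * l ^ d) := Nat.mul_le_mul_right _ h2
    _ = _ := by ring

theorem binTerm_succ_le {k l j : ℕ} (hj : k ≤ j) (hj' : j < k + l) :
    (k + l).choose (j + 1) * k ^ (j + 1) * l ^ (k + l - (j + 1))
      ≤ (k + l).choose j * k ^ j * l ^ (k + l - j) := by
  obtain ⟨d, hd⟩ : ∃ d, k + l - j = d + 1 := ⟨k + l - j - 1, by omega⟩
  have hd' : k + l - (j + 1) = d := by omega
  have h1 := Nat.choose_succ_right_eq (k + l) j
  rw [hd, hd']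
  rw [hd] at h1
  have h2 : (k + l).choose (j + 1) * k ≤ (k + l).choose j * l := by
    refine Nat.le_of_mul_le_mul_right ?_ (Nat.succ_pos j)
    calc (k + l).choose (j + 1) * k * (j + 1) = (k + l).choose j * (d + 1) * k := by rw [← h1]; ring
      _ ≤ (k + l).choose j * l * (j + 1) := by
          rw [mul_assoc, mul_assoc]
          exact Nat.mul_le_mul_left _ (Nat.mul_le_mul (by omega) (by omega))
  calc _ = ((k + l).choose (j + 1) * k) * (k ^ j * l ^ d) := by ring
    _ ≤ ((k + l).choose j * l) * (k ^ j * l ^ d) := Nat.mul_le_mul_right _ h2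
    _ = _ := by ring

/-- With `p = k / (k + l)`, the binomial distribution `Bin(k + l, p)` has its mode at `k`
(stated without denominators). -/
theorem binTerm_le_mode {k l j : ℕ} (hj : j ≤ k + l) :
    (k + l).choose j * k ^ j * l ^ (k + l - j) ≤ (k + l).choose k * k ^ k * l ^ l := by
  have up : ∀ d i, i + d = k → (k + l).choose i * k ^ i * l ^ (k + l - i)
      ≤ (k + l).choose k * k ^ k * l ^ l := by
    intro d
    induction d with
    | zero => rintro i rfl; simp
    | succ d ih =>
      intro i hi
      exact (binTerm_le_succ (by omega)).trans (ih (i + 1) (by omega))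
  have down : ∀ d, d ≤ l → (k + l).choose (k + d) * k ^ (k + d) * l ^ (k + l - (k + d))
      ≤ (k + l).choose k * k ^ k * l ^ l := by
    intro d
    induction d with
    | zero => intro _; simp
    | succ d ih =>
      intro hd
      exact (binTerm_succ_le (j := k + d) (by omega) (by omega)).trans (ih (by omega))
  rcases le_total j k with h | h
  · exact up (k - j) j (by omega)
  · obtain ⟨d, rfl⟩ := Nat.exists_eq_add_of_le h
    exact down d (by omega)

theorem choose_mul_le_pow (k l : ℕ) :
    (k + l).choose k * k ^ k * l ^ l ≤ (k + l) ^ (k + l) := by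
  rw [add_pow k l (k + l)]
  refine le_trans (le_of_eq ?_) (Finset.single_le_sum
    (f := fun i => k ^ i * l ^ (k + l - i) * (k + l).choose i) (fun _ _ => Nat.zero_le _)
    (Finset.mem_range.2 (show k < k + l + 1 by omega)))
  simp only [Nat.add_sub_cancel_left]; ring

theorem pow_le_choose_mul (k l : ℕ) :
    (k + l) ^ (k + l) ≤ (k + l + 1) * ((k + l).choose k * k ^ k * l ^ l) := by
  conv_lhs => rw [add_pow k l (k + l)]
  refine (Finset.sum_le_card_nsmul _ _ ((k + l).choose k * k ^ k * l ^ l) ?_).trans (by simp)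
  intro j hj
  refine le_trans (le_of_eq ?_) (binTerm_le_mode (j := j) (by simpa [Nat.lt_succ_iff] using hj))
  simp only [Nat.cast_id]; ring

theorem mul_binEnt {k l : ℕ} (h : 0 < k + l) :
    ((k + l : ℕ) : ℝ) * binEnt (k / (k + l : ℕ))
      = (k + l : ℕ) * Real.logb 2 (k + l : ℕ) - k * Real.logb 2 k - l * Real.logb 2 l := by
  have h0 : ((k + l : ℕ) : ℝ) ≠ 0 := by positivity
  have h1 : (1 : ℝ) - k / (k + l : ℕ) = l / (k + l : ℕ) := by
    field_simp; push_cast; ring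
  have key : ∀ i : ℕ, (i : ℝ) * Real.logb 2 (i / (k + l : ℕ))
      = i * Real.logb 2 i - i * Real.logb 2 (k + l : ℕ) := by
    intro i
    rcases Nat.eq_zero_or_pos i with rfl | hi
    · simp
    · rw [Real.logb_div (by positivity) h0]; ring
  have : ((k + l : ℕ) : ℝ) * binEnt (k / (k + l : ℕ))
      = -(k * Real.logb 2 (k / (k + l : ℕ))) - l * Real.logb 2 (l / (k + l : ℕ)) := by
    unfold binEnt; rw [h1]; field_simp
  rw [this, key k, key l]; push_cast; ring

/-- `log₂ C(M,k) = M · H(k/M) + O(log M)`: the mode of `Bin(M, k/M)` has mass at most `1` and at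
least `1/(M+1)`. -/
theorem logb_choose_bounds {M k : ℕ} (hk : k ≤ M) (hM : 0 < M) :
    Real.logb 2 (M.choose k) ≤ M * binEnt (k / M) ∧
    M * binEnt (k / M) ≤ Real.logb 2 (M.choose k) + Real.logb 2 (M + 1) := by
  obtain ⟨l, rfl⟩ := Nat.exists_eq_add_of_le hk
  rw [mul_binEnt hM]
  have hpow : ∀ i : ℕ, (0 : ℝ) < (i : ℝ) ^ i := by
    intro i
    rcases Nat.eq_zero_or_pos i with rfl | hi
    · simp
    · positivity
  have hC : (0 : ℝ) < ((k + l).choose k : ℝ) := by exact_mod_cast Nat.choose_pos hk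
  have e : Real.logb 2 (((k + l).choose k : ℝ) * (k : ℝ) ^ k * (l : ℝ) ^ l)
      = Real.logb 2 ((k + l).choose k) + k * Real.logb 2 k + l * Real.logb 2 l := by
    rw [Real.logb_mul (mul_pos hC (hpow k)).ne' (hpow l).ne', Real.logb_mul hC.ne' (hpow k).ne',
      Real.logb_pow, Real.logb_pow]
  have u := choose_mul_le_pow k l
  have v := pow_le_choose_mul k l
  have u' : ((k + l).choose k : ℝ) * (k : ℝ) ^ k * (l : ℝ) ^ l ≤ ((k + l : ℕ) : ℝ) ^ (k + l) := by
    exact_mod_cast u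
  have v' : ((k + l : ℕ) : ℝ) ^ (k + l) ≤
      (((k + l : ℕ) : ℝ) + 1) * (((k + l).choose k : ℝ) * (k : ℝ) ^ k * (l : ℝ) ^ l) := by
    exact_mod_cast v
  have hT := mul_pos (mul_pos hC (hpow k)) (hpow l)
  have u2 := Real.logb_le_logb_of_le (b := 2) (by norm_num) hT u'
  have v2 := Real.logb_le_logb_of_le (b := 2) (by norm_num) (hpow (k + l)) v'
  rw [Real.logb_mul (by positivity) hT.ne'] at v2
  rw [e, Real.logb_pow] at u2 v2
  constructor <;> linarith

theorem binEnt_eq (x : ℝ) : binEnt x = Real.binEntropy x / Real.log 2 := by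
  rw [Real.binEntropy_eq_negMulLog_add_negMulLog_one_sub]
  simp only [binEnt, Real.logb, Real.negMulLog]; ring

theorem continuous_binEnt : Continuous binEnt := by
  have : binEnt = fun x => Real.binEntropy x / Real.log 2 := funext binEnt_eq
  rw [this]; exact Real.binEntropy_continuous.div_const _

theorem binEnt_one_sub (x : ℝ) : binEnt (1 - x) = binEnt x := by
  unfold binEnt; rw [sub_sub_cancel]; ring

theorem binEnt_half : binEnt (1 / 2) = 1 := by
  rw [binEnt_eq, one_div, Real.binEntropy_two_inv, div_self]; positivity

theorem sum_choose_le_two_pow (M k : ℕ) : ∑ j ∈ range (k + 1), M.choose j ≤ 2 ^ M := by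
  rw [← Nat.sum_range_choose]
  refine Finset.sum_le_sum_of_ne_zero fun j _ hj => ?_
  by_contra h
  exact hj (Nat.choose_eq_zero_of_lt (by simpa using h))

theorem sum_choose_le {M k : ℕ} (hk : 2 * k ≤ M) :
    ∑ j ∈ range (k + 1), M.choose j ≤ (k + 1) * M.choose k := by
  refine (Finset.sum_le_card_nsmul _ _ (M.choose k) ?_).trans (by simp)
  have : ∀ d j, j + d = k → M.choose j ≤ M.choose k := by
    intro d
    induction d with
    | zero => rintro j rfl; simp
    | succ d ih =>
      intro j hj
      exact (Nat.choose_le_succ_of_lt_half_left (by omega)).trans (ih (j + 1) (by omega))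
  intro j hj
  exact this (k - j) j (by have := Finset.mem_range.1 hj; omega)

/-! ### Counting generalised split graphs -/

/-- The number of generalised split graphs on `Fin n` with exactly `m` edges. -/
noncomputable def splitCount (n m : ℕ) : ℕ :=
  #{G : SimpleGraph (Fin n) | IsGenSplit G ∧ edgeCount G = m}

theorem edgeCount_eq_ncard {V : Type} (G : SimpleGraph V) : edgeCount G = G.edgeSet.ncard := rfl

theorem edgeCount_add_compl {n : ℕ} (G : SimpleGraph (Fin n)) :
    edgeCount G + edgeCount Gᶜ = n.choose 2 := by
  rw [edgeCount_eq_ncard, edgeCount_eq_ncard, ← Set.ncard_union_eq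
    ((SimpleGraph.disjoint_edgeSet).2 disjoint_compl_right) (Set.toFinite _) (Set.toFinite _),
    ← SimpleGraph.edgeSet_sup, sup_compl_eq_top, ← SimpleGraph.coe_edgeFinset,
    Set.ncard_coe_finset, SimpleGraph.card_edgeFinset_top_eq_card_choose_two, Fintype.card_fin]

theorem splitCount_compl {n m : ℕ} (hm : m ≤ n.choose 2) :
    splitCount n (n.choose 2 - m) = splitCount n m := by
  unfold splitCount
  refine Finset.card_bij' (fun G _ => Gᶜ) (fun G _ => Gᶜ) ?_ ?_ (by simp) (by simp)
  all_goals
    intro G hG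
    simp only [Finset.mem_filter, Finset.mem_univ, true_and] at hG ⊢
    refine ⟨by simpa [IsGenSplit, or_comm] using hG.1, ?_⟩
    have := edgeCount_add_compl G
    omega

/-- The pairs `(u, v)` with `u ∈ A`, `v ∉ A` that are edges of `G`. -/
noncomputable def crossPairs {n : ℕ} (A : Finset (Fin n)) (G : SimpleGraph (Fin n)) :
    Finset (Fin n × Fin n) :=
  (A ×ˢ Aᶜ).filter fun p => G.Adj p.1 p.2

theorem mk_injOn_cross {n : ℕ} (A : Finset (Fin n)) :
    Set.InjOn (fun p : Fin n × Fin n => s(p.1, p.2)) (A ×ˢ Aᶜ : Finset (Fin n × Fin n)) := by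
  rintro ⟨u, v⟩ h ⟨u', v'⟩ h' e
  simp only [Finset.coe_product, Set.mem_prod, Finset.mem_coe, Finset.mem_compl] at h h'
  simp only [Sym2.eq_iff] at e
  rcases e with ⟨rfl, rfl⟩ | ⟨rfl, rfl⟩
  · rfl
  · exact absurd h.1 h'.2

theorem card_crossPairs_le {n : ℕ} (A : Finset (Fin n)) (G : SimpleGraph (Fin n)) :
    #(crossPairs A G) ≤ edgeCount G := by
  rw [edgeCount_eq_ncard, ← Set.ncard_coe_finset]
  refine Set.ncard_le_ncard_of_injOn (fun p : Fin n × Fin n => s(p.1, p.2)) ?_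
    ((mk_injOn_cross A).mono ?_) (Set.toFinite _)
  · intro p hp
    exact (Finset.mem_filter.1 hp).2
  · exact_mod_cast Finset.filter_subset _ _

theorem mul_compl_le {n a : ℕ} (h : a ≤ n) : a * (n - a) ≤ n / 2 * (n - n / 2) := by
  obtain ⟨b, rfl⟩ := Nat.exists_eq_add_of_le h
  obtain ⟨q, hq | hq⟩ : ∃ q, a + b = 2 * q ∨ a + b = 2 * q + 1 := ⟨(a + b) / 2, by omega⟩
  · have e1 : (a + b) / 2 = q := by omega
    have e2 : a + b - q = q := by omega
    rw [e1, e2, Nat.add_sub_cancel_left]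
    zify at hq ⊢
    nlinarith [sq_nonneg ((a : ℤ) - b)]
  · have e1 : (a + b) / 2 = q := by omega
    have e2 : a + b - q = q + 1 := by omega
    rw [e1, e2, Nat.add_sub_cancel_left]
    zify at hq ⊢
    obtain h | h : (a : ℤ) ≤ q ∨ (q : ℤ) + 1 ≤ a := by omega
    all_goals nlinarith

/-- A family of graphs with `m` edges whose members are determined by their edges across
`(A, Aᶜ)` has at most as many members as there are sets of at most `m` pairs among `⌊n²/4⌋`. -/
theorem card_le_of_cross {n m : ℕ} (A : Finset (Fin n)) (S : Finset (SimpleGraph (Fin n)))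
    (hm : ∀ G ∈ S, edgeCount G = m)
    (hdet : ∀ G ∈ S, ∀ G' ∈ S, crossPairs A G = crossPairs A G' → G = G') :
    #S ≤ ∑ j ∈ range (m + 1), (n / 2 * (n - n / 2)).choose j := by
  calc #S ≤ #((range (m + 1)).biUnion fun j => powersetCard j (A ×ˢ Aᶜ)) := by
        refine Finset.card_le_card_of_injOn (crossPairs A) ?_ hdet
        intro G hG
        simp only [Finset.coe_biUnion, Set.mem_iUnion, Finset.mem_coe, Finset.mem_range,
          Finset.mem_powersetCard, exists_prop]
        refine ⟨_, ?_, Finset.filter_subset _ _, rfl⟩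
        have h1 := card_crossPairs_le A G
        rw [hm G hG] at h1
        exact Nat.lt_succ_of_le h1
    _ ≤ ∑ j ∈ range (m + 1), #(powersetCard j (A ×ˢ Aᶜ)) := Finset.card_biUnion_le
    _ ≤ _ := by
        refine Finset.sum_le_sum fun j _ => ?_
        rw [Finset.card_powersetCard, Finset.card_product, Finset.card_compl, Fintype.card_fin]
        exact Nat.choose_le_choose _ (mul_compl_le (by simpa using Finset.card_le_univ A))

/-- `f` labels a generalised clique partition of `G`, with `none` labelling the first part. -/
def IsLabelling {n : ℕ} (f : Fin n → Option (Fin n)) (G : SimpleGraph (Fin n)) : Prop :=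
  (∀ u v, f u = f v → u ≠ v → G.Adj u v) ∧
    (∀ u v, f u ≠ f v → f u ≠ none → f v ≠ none → ¬ G.Adj u v)

/-- A generalised clique partition of a graph on `n` vertices can be labelled by a type with
`n + 1` elements, so that only `(n + 1) ^ n` labellings have to be considered. -/
theorem exists_isLabelling {n : ℕ} {G : SimpleGraph (Fin n)} (h : HasGenCliquePartition G) :
    ∃ f, IsLabelling f G := by
  obtain ⟨f, h1, h2⟩ := h
  rcases isEmpty_or_nonempty (Fin n) with hn | hn
  · exact ⟨fun _ => none, fun u => hn.elim u, fun u => hn.elim u⟩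
  -- A nonzero label is replaced by a chosen vertex carrying it.
  have hinv : ∀ v, f (Function.invFun f (f v)) = f v := fun v => Function.invFun_eq ⟨v, rfl⟩
  have hnone : ∀ v, (if f v = 0 then none else some (Function.invFun f (f v))) ≠ none → f v ≠ 0 := by
    intro v hv h0
    simp [h0] at hv
  refine ⟨fun v => if f v = 0 then none else some (Function.invFun f (f v)), ?_, ?_⟩
  · intro u v huv
    refine h1 u v ?_
    by_cases hu : f u = 0 <;> by_cases hv : f v = 0
    · rw [hu, hv]
    · simp [hu, hv] at huv
    · simp [hu, hv] at huv
    · simp only [hu, hv, if_false, Option.some.injEq] at huv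
      rw [← hinv u, huv, hinv v]
  · intro u v huv hu hv
    refine h2 u v ?_ (hnone u hu) (hnone v hv)
    intro e
    exact huv (by simp only [e])

/-- Given its labelling, a graph is determined by the edges between the first part and the
rest. -/
theorem IsLabelling.eq_of_cross {n : ℕ} {f : Fin n → Option (Fin n)} {G G' : SimpleGraph (Fin n)}
    (h : IsLabelling f G) (h' : IsLabelling f G')
    (hc : ∀ u v, f u = none → f v ≠ none → (G.Adj u v ↔ G'.Adj u v)) : G = G' := by
  ext u v
  by_cases huv : u = v
  · subst huv; simp
  by_cases e : f u = f v
  · exact iff_of_true (h.1 u v e huv) (h'.1 u v e huv)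
  by_cases hu : f u = none
  · exact hc u v hu (fun hv => e (hu.trans hv.symm))
  by_cases hv : f v = none
  · rw [G.adj_comm, G'.adj_comm]
    exact hc v u hv hu
  · exact iff_of_false (h.2 u v e hu hv) (h'.2 u v e hu hv)

theorem adj_iff_of_crossPairs_eq {n : ℕ} {A : Finset (Fin n)} {G G' : SimpleGraph (Fin n)}
    (h : crossPairs A G = crossPairs A G') {u v : Fin n} (hu : u ∈ A) (hv : v ∉ A) :
    G.Adj u v ↔ G'.Adj u v := by
  have := Finset.ext_iff.1 h (u, v)
  simpa [crossPairs, hu, hv] using this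

/-- A generalised split graph is determined by which of `G`, `Gᶜ` has the partition (factor `2`),
a labelling, and at most `m` edges leaving the first part. -/
theorem splitCount_le (n m : ℕ) :
    splitCount n m ≤
      2 * (n + 1) ^ n * ∑ j ∈ range (m + 1), (n / 2 * (n - n / 2)).choose j := by
  set R := ∑ j ∈ range (m + 1), (n / 2 * (n - n / 2)).choose j with hR
  have hlab : #(univ : Finset (Fin n → Option (Fin n))) = (n + 1) ^ n := by
    simp
  have b1 : #((univ : Finset (Fin n → Option (Fin n))).biUnion fun f =>
      {G : SimpleGraph (Fin n) | IsLabelling f G ∧ edgeCount G = m}) ≤ (n + 1) ^ n * R := by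
    rw [← hlab]
    refine Finset.card_biUnion_le_card_mul _ _ _ fun f _ => ?_
    refine card_le_of_cross {v | f v = none} _ (fun G hG => (Finset.mem_filter.1 hG).2.2) ?_
    intro G hG G' hG' e
    refine (Finset.mem_filter.1 hG).2.1.eq_of_cross (Finset.mem_filter.1 hG').2.1 ?_
    intro u v hu hv
    exact adj_iff_of_crossPairs_eq e (by simpa using hu) (by simpa using hv)
  have b2 : #((univ : Finset (Fin n → Option (Fin n))).biUnion fun f =>
      {G : SimpleGraph (Fin n) | IsLabelling f Gᶜ ∧ edgeCount G = m}) ≤ (n + 1) ^ n * R := by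
    rw [← hlab]
    refine Finset.card_biUnion_le_card_mul _ _ _ fun f _ => ?_
    refine card_le_of_cross {v | f v = none} _ (fun G hG => (Finset.mem_filter.1 hG).2.2) ?_
    intro G hG G' hG' e
    refine compl_injective ((Finset.mem_filter.1 hG).2.1.eq_of_cross
      (Finset.mem_filter.1 hG').2.1 ?_)
    intro u v hu hv
    have := adj_iff_of_crossPairs_eq e (u := u) (v := v) (by simpa using hu) (by simpa using hv)
    simp only [SimpleGraph.compl_adj, this]
  refine le_trans ?_ ((Finset.card_union_le _ _).trans
    ((add_le_add b1 b2).trans (le_of_eq (by ring))))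
  refine Finset.card_le_card fun G hG => ?_
  obtain ⟨hs, he⟩ := (Finset.mem_filter.1 hG).2
  rcases hs with hs | hs
  · obtain ⟨f, hf⟩ := exists_isLabelling hs
    exact Finset.mem_union_left _ (Finset.mem_biUnion.2 ⟨f, mem_univ _, by simp [hf, he]⟩)
  · obtain ⟨f, hf⟩ := exists_isLabelling hs
    exact Finset.mem_union_right _ (Finset.mem_biUnion.2 ⟨f, mem_univ _, by simp [hf, he]⟩)

/-- The graph whose edges are all pairs inside `A`, all pairs inside `T`, and the
unordered versions of the pairs in `s`. -/
def twoCliqueGraph {n : ℕ} (A T : Finset (Fin n)) (s : Finset (Fin n × Fin n)) :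
    SimpleGraph (Fin n) where
  Adj u v := u ≠ v ∧ ((u ∈ A ∧ v ∈ A) ∨ (u ∈ T ∧ v ∈ T) ∨ (u, v) ∈ s ∨ (v, u) ∈ s)
  symm := ⟨fun u v h => ⟨h.1.symm, by tauto⟩⟩
  loopless := ⟨fun u h => h.1 rfl⟩

theorem edgeCount_twoCliqueGraph {n : ℕ} {A T : Finset (Fin n)} (hAT : Disjoint A T)
    {s : Finset (Fin n × Fin n)} (hs : s ⊆ A ×ˢ Aᶜ) :
    edgeCount (twoCliqueGraph A T s) = (#A).choose 2 + (#T).choose 2 + #s := by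
  have hs' : ∀ u v, (u, v) ∈ s → u ∈ A ∧ v ∉ A := fun u v h => by simpa using hs h
  have hT : ∀ u, u ∈ T → u ∉ A := fun u hu hA => Finset.disjoint_left.1 hAT hA hu
  have m1 : ∀ (X : Finset (Fin n)) (u v), s(u, v) ∈ X.offDiag.image Sym2.mk.uncurry ↔
      u ∈ X ∧ v ∈ X ∧ u ≠ v := by
    intro X u v
    simp only [Finset.mem_image, Finset.mem_offDiag, Prod.exists, Function.uncurry, Sym2.eq_iff]
    constructor
    · rintro ⟨x, y, ⟨hx, hy, hxy⟩, ⟨rfl, rfl⟩ | ⟨rfl, rfl⟩⟩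
      · exact ⟨hx, hy, hxy⟩
      · exact ⟨hy, hx, hxy.symm⟩
    · rintro h
      exact ⟨u, v, h, Or.inl ⟨rfl, rfl⟩⟩
  have m2 : ∀ u v, s(u, v) ∈ s.image Sym2.mk.uncurry ↔ (u, v) ∈ s ∨ (v, u) ∈ s := by
    intro u v
    simp only [Finset.mem_image, Prod.exists, Function.uncurry, Sym2.eq_iff]
    constructor
    · rintro ⟨x, y, h, ⟨rfl, rfl⟩ | ⟨rfl, rfl⟩⟩
      · exact Or.inl h
      · exact Or.inr h
    · rintro (h | h)
      · exact ⟨u, v, h, Or.inl ⟨rfl, rfl⟩⟩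
      · exact ⟨v, u, h, Or.inr ⟨rfl, rfl⟩⟩
  have e : (twoCliqueGraph A T s).edgeSet =
      ((A.offDiag.image Sym2.mk.uncurry ∪ T.offDiag.image Sym2.mk.uncurry) ∪
        s.image Sym2.mk.uncurry : Finset (Sym2 (Fin n))) := by
    ext z
    induction z using Sym2.ind with
    | h u v =>
      rw [SimpleGraph.mem_edgeSet, Finset.mem_coe, Finset.mem_union, Finset.mem_union, m1, m1, m2]
      simp only [twoCliqueGraph]
      have : (u, v) ∈ s ∨ (v, u) ∈ s → u ≠ v := by
        rintro (h | h) rfl <;> exact (hs' _ _ h).2 (hs' _ _ h).1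
      tauto
  rw [edgeCount_eq_ncard, e, Set.ncard_coe_finset, Finset.card_union_of_disjoint,
    Finset.card_union_of_disjoint, Sym2.card_image_offDiag, Sym2.card_image_offDiag,
    Finset.card_image_of_injOn]
  · exact (mk_injOn_cross A).mono (by exact_mod_cast hs)
  · rw [Finset.disjoint_left]
    intro z
    induction z using Sym2.ind with
    | h u v =>
      rw [m1, m1]
      exact fun h h' => hT _ h'.1 h.1
  · rw [Finset.disjoint_left]
    intro z
    induction z using Sym2.ind with
    | h u v =>
      rw [Finset.mem_union, m1, m1, m2]
      rintro (h | h) (h' | h')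
      · exact (hs' _ _ h').2 h.2.1
      · exact (hs' _ _ h').2 h.1
      · exact hT _ h.1 (hs' _ _ h').1
      · exact hT _ h.2.1 (hs' _ _ h').1

theorem isGenSplit_twoCliqueGraph {n : ℕ} {A T : Finset (Fin n)} (hAT : Disjoint A T)
    {s : Finset (Fin n × Fin n)} (hs : s ⊆ A ×ˢ Aᶜ) : IsGenSplit (twoCliqueGraph A T s) := by
  have hs' : ∀ u v, (u, v) ∈ s → u ∈ A ∧ v ∉ A := fun u v h => by simpa using hs h
  have hT : ∀ u, u ∈ T → u ∉ A := fun u hu hA => Finset.disjoint_left.1 hAT hA hu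
  refine Or.inl ⟨fun v => if v ∈ A then 0 else if v ∈ T then 1 else v + 2, ?_, ?_⟩
  · intro u v h huv
    refine ⟨huv, ?_⟩
    dsimp only at h
    split_ifs at h <;> first | tauto | omega
  · intro u v h hu hv hadj
    have hu' : u ∉ A := fun h => hu (by simp [h])
    have hv' : v ∉ A := fun h => hv (by simp [h])
    rcases hadj.2 with h1 | h1 | h1 | h1
    · exact hu' h1.1
    · exact h (by simp [hu', hv', h1])
    · exact hu' (hs' _ _ h1).1
    · exact hv' (hs' _ _ h1).1

/-- Every choice of `e` edges between `A` and its complement extends the cliques on `A` and `T` to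
a different generalised split graph: the parts are `A`, `T` and singletons. -/
theorem choose_le_splitCount {n : ℕ} {A T : Finset (Fin n)} (hAT : Disjoint A T) (e : ℕ) :
    (#A * (n - #A)).choose e ≤ splitCount n ((#A).choose 2 + (#T).choose 2 + e) := by
  have hT : ∀ u, u ∈ T → u ∉ A := fun u hu hA => Finset.disjoint_left.1 hAT hA hu
  have h1 : (#A * (n - #A)).choose e = #(powersetCard e (A ×ˢ Aᶜ)) := by
    rw [Finset.card_powersetCard, Finset.card_product, Finset.card_compl, Fintype.card_fin]
  rw [h1]
  refine Finset.card_le_card_of_injOn (twoCliqueGraph A T) ?_ ?_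
  · intro s hs
    obtain ⟨hs, hc⟩ := Finset.mem_powersetCard.1 hs
    simp only [Finset.coe_filter, Finset.mem_univ, true_and, Set.mem_ofPred_eq]
    exact ⟨isGenSplit_twoCliqueGraph hAT hs, by rw [edgeCount_twoCliqueGraph hAT hs, hc]⟩
  · have key : ∀ s ∈ powersetCard e (A ×ˢ Aᶜ), ∀ p : Fin n × Fin n,
        p ∈ s ↔ p ∈ A ×ˢ Aᶜ ∧ (twoCliqueGraph A T s).Adj p.1 p.2 := by
      rintro s hs ⟨u, v⟩
      have hs := (Finset.mem_powersetCard.1 hs).1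
      have hs' : ∀ u v, (u, v) ∈ s → u ∈ A ∧ v ∉ A := fun u v h => by simpa using hs h
      simp only [Finset.mem_product, Finset.mem_compl, twoCliqueGraph]
      constructor
      · intro h
        refine ⟨hs' _ _ h, ?_, Or.inr (Or.inr (Or.inl h))⟩
        rintro rfl
        exact (hs' _ _ h).2 (hs' _ _ h).1
      · rintro ⟨⟨hu, hv⟩, -, h | h | h | h⟩
        · exact absurd h.2 hv
        · exact absurd hu (hT _ h.1)
        · exact h
        · exact absurd (hs' _ _ h).1 hv
    intro s hs s' hs' h
    ext p
    rw [key s hs, key s' hs', h]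

theorem choose_le_splitCount_of_le {n a t : ℕ} (h : a + t ≤ n) (e : ℕ) :
    (a * (n - a)).choose e ≤ splitCount n (a.choose 2 + t.choose 2 + e) := by
  obtain ⟨A, -, hA⟩ := Finset.exists_subset_card_eq (s := (univ : Finset (Fin n))) (n := a)
    (by simp; omega)
  obtain ⟨T, hTA, hT⟩ := Finset.exists_subset_card_eq (s := Aᶜ) (n := t)
    (by rw [Finset.card_compl, Fintype.card_fin]; omega)
  have := choose_le_splitCount (A := A) (T := T)
    (Finset.disjoint_left.2 fun u hu hu' => (Finset.mem_compl.1 (hTA hu')) hu) e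
  rwa [hA, hT] at this

/-! ### Asymptotics -/

open Filter Topology in
theorem tendsto_half : Tendsto (fun n : ℕ => ((n / 2 : ℕ) : ℝ) / n) atTop (𝓝 (1 / 2)) := by
  have h := (tendsto_nat_floor_mul_div_atTop (R := ℝ) (a := 1 / 2) (by norm_num)).comp
    tendsto_natCast_atTop_atTop
  refine h.congr fun n => ?_
  simp only [Function.comp]
  congr 2
  rw [one_div_mul_eq_div]
  exact_mod_cast Nat.floor_div_eq_div (K := ℝ) n 2

open Filter Topology in
theorem tendsto_half' : Tendsto (fun n : ℕ => ((n - n / 2 : ℕ) : ℝ) / n) atTop (𝓝 (1 / 2)) := by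
  have h : Tendsto (fun n : ℕ => 1 - ((n / 2 : ℕ) : ℝ) / n) atTop (𝓝 (1 - 1 / 2)) :=
    tendsto_const_nhds.sub tendsto_half
  rw [show (1 : ℝ) - 1 / 2 = 1 / 2 by norm_num] at h
  refine h.congr' ?_
  filter_upwards [eventually_gt_atTop 0] with n hn
  rw [Nat.cast_sub (Nat.div_le_self n 2)]
  have : (n : ℝ) ≠ 0 := by positivity
  field_simp

open Filter Topology in
theorem tendsto_quarter :
    Tendsto (fun n : ℕ => ((n / 2 * (n - n / 2) : ℕ) : ℝ) / (n : ℝ) ^ 2) atTop (𝓝 (1 / 4)) := by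
  have h := tendsto_half.mul tendsto_half'
  rw [show (1 / 2 : ℝ) * (1 / 2) = 1 / 4 by norm_num] at h
  refine h.congr fun n => ?_
  rw [div_mul_div_comm, Nat.cast_mul, sq]

open Filter Topology in
theorem tendsto_choose_two {a : ℕ → ℕ} {α : ℝ}
    (h : Tendsto (fun n : ℕ => (a n : ℝ) / n) atTop (𝓝 α)) :
    Tendsto (fun n : ℕ => ((a n).choose 2 : ℝ) / (n : ℝ) ^ 2) atTop (𝓝 (α ^ 2 / 2)) := by
  have h1 : Tendsto (fun n : ℕ => (1 : ℝ) / n) atTop (𝓝 0) := tendsto_one_div_atTop_nhds_zero_nat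
  have h2 := (h.mul (h.sub h1)).div_const 2
  rw [show α * (α - 0) / 2 = α ^ 2 / 2 by ring] at h2
  refine h2.congr fun n => ?_
  rw [Nat.cast_choose_two]
  rcases Nat.eq_zero_or_pos n with rfl | hn
  · simp
  · field_simp

open Filter Topology in
theorem tendsto_total :
    Tendsto (fun n : ℕ => (n.choose 2 : ℝ) / (n : ℝ) ^ 2) atTop (𝓝 (1 / 2)) := by
  have : Tendsto (fun n : ℕ => (n : ℝ) / n) atTop (𝓝 1) := by
    refine tendsto_const_nhds.congr' ?_
    filter_upwards [eventually_gt_atTop 0] with n hn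
    rw [div_self]; positivity
  simpa using tendsto_choose_two (a := fun n => n) this

open Filter Topology in
/-- Limits of quotients of quantities normalised by `n²`. -/
theorem tendsto_div_of_sq {x y : ℕ → ℝ} {α β : ℝ} (hβ : β ≠ 0)
    (hx : Tendsto (fun n : ℕ => x n / (n : ℝ) ^ 2) atTop (𝓝 α))
    (hy : Tendsto (fun n : ℕ => y n / (n : ℝ) ^ 2) atTop (𝓝 β)) :
    Tendsto (fun n => x n / y n) atTop (𝓝 (α / β)) := by
  refine (hx.div hy hβ).congr' ?_
  filter_upwards [eventually_gt_atTop 0] with n hn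
  have : ((n : ℝ) ^ 2) ≠ 0 := by positivity
  exact div_div_div_cancel_right₀ this _ _

open Filter Topology in
/-- The error term `n · log₂(n+1)`, which absorbs the number of labellings and the polynomial
factors, is negligible on the scale `C(n,2)`. -/
theorem tendsto_err :
    Tendsto (fun n : ℕ => (n : ℝ) * Real.logb 2 (n + 1) / (n.choose 2 : ℝ)) atTop (𝓝 0) := by
  have h0 : Tendsto (fun x : ℝ => Real.log x / x) atTop (𝓝 0) :=
    Real.isLittleO_log_id_atTop.tendsto_div_nhds_zero
  have h1 : Tendsto (fun n : ℕ => Real.log ((n : ℝ) + 1) / ((n : ℝ) + 1)) atTop (𝓝 0) :=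
    h0.comp (tendsto_atTop_add_const_right _ 1 tendsto_natCast_atTop_atTop)
  have h2 : Tendsto (fun n : ℕ => 1 + (1 : ℝ) / n) atTop (𝓝 (1 + 0)) :=
    tendsto_const_nhds.add tendsto_one_div_atTop_nhds_zero_nat
  have h3 := (h1.mul h2).div_const (Real.log 2)
  rw [zero_mul, zero_div] at h3
  rw [show (0 : ℝ) = 0 / (1 / 2) by simp]
  refine tendsto_div_of_sq (by norm_num) (h3.congr' ?_) tendsto_total
  filter_upwards [eventually_gt_atTop 0] with n hn
  rw [Real.logb]
  have : Real.log 2 ≠ 0 := by positivity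
  field_simp

theorem logb_succ_le {n x : ℕ} (hn : 0 < n) (hx : x ≤ n ^ 2) :
    Real.logb 2 (x + 1) ≤ 2 * (n * Real.logb 2 (n + 1)) := by
  have h1 : (1 : ℝ) ≤ n := by exact_mod_cast hn
  have hx' : (x : ℝ) ≤ (n : ℝ) ^ 2 := by exact_mod_cast hx
  have hL : 0 ≤ Real.logb 2 ((n : ℝ) + 1) := Real.logb_nonneg (by norm_num) (by linarith)
  calc Real.logb 2 (x + 1) ≤ Real.logb 2 (((n : ℝ) + 1) ^ 2) :=
        Real.logb_le_logb_of_le (by norm_num) (by positivity) (by nlinarith)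
    _ = 2 * Real.logb 2 (n + 1) := by rw [Real.logb_pow]; norm_num
    _ ≤ _ := by nlinarith

theorem one_le_err {n : ℕ} (hn : 0 < n) : 1 ≤ (n : ℝ) * Real.logb 2 (n + 1) := by
  have h1 : (1 : ℝ) ≤ n := by exact_mod_cast hn
  have hL : 1 ≤ Real.logb 2 ((n : ℝ) + 1) := by
    refine (Real.logb_self_eq_one (b := 2) (by norm_num)).symm.le.trans ?_
    exact Real.logb_le_logb_of_le (by norm_num) (by norm_num) (by linarith)
  nlinarith

theorem hfun_one_sub {c : ℝ} : hfun (1 - c) = hfun c := by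
  unfold hfun
  rcases lt_or_ge c (1 / 4) with h | h
  · rw [if_neg (by linarith), if_neg (by linarith), if_pos h, ← binEnt_one_sub]
    congr 2; ring
  · rcases le_or_gt c (3 / 4) with h' | h'
    · rw [if_neg (by linarith), if_pos (by linarith), if_neg (by linarith), if_pos h']
    · rw [if_pos (by linarith), if_neg (by linarith), if_neg (by linarith), ← binEnt_one_sub]
      congr 2; ring

theorem le_logb_splitCount {n m a t : ℕ} (hn : 0 < n) (hat : a + t ≤ n)
    (hx : a.choose 2 + t.choose 2 ≤ m) (hQ : 0 < a * (n - a))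
    (he : m - (a.choose 2 + t.choose 2) ≤ a * (n - a)) :
    0 < splitCount n m ∧
    ((a * (n - a) : ℕ) : ℝ) *
        binEnt (((m - (a.choose 2 + t.choose 2) : ℕ) : ℝ) / ((a * (n - a) : ℕ) : ℝ))
      - 2 * (n * Real.logb 2 (n + 1)) ≤ Real.logb 2 (splitCount n m) := by
  have h1 := choose_le_splitCount_of_le hat (m - (a.choose 2 + t.choose 2))
  rw [Nat.add_sub_cancel' hx] at h1
  have h2 := Nat.choose_pos he
  refine ⟨h2.trans_le h1, ?_⟩
  have h3 := (logb_choose_bounds he hQ).2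
  have h4 := logb_succ_le (x := a * (n - a)) hn (by
    rw [sq]; exact Nat.mul_le_mul (by omega) (by omega))
  have h5 : Real.logb 2 ((a * (n - a)).choose (m - (a.choose 2 + t.choose 2)))
      ≤ Real.logb 2 (splitCount n m) :=
    Real.logb_le_logb_of_le (by norm_num) (by exact_mod_cast h2) (by exact_mod_cast h1)
  linarith

theorem logb_splitCount_le_of_le {n m R : ℕ} (hpos : 0 < splitCount n m) (hn : 0 < n)
    (hR : ∑ j ∈ range (m + 1), (n / 2 * (n - n / 2)).choose j ≤ R) :
    Real.logb 2 (splitCount n m) ≤ 2 * (n * Real.logb 2 (n + 1)) + Real.logb 2 R := by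
  have h1 : splitCount n m ≤ 2 * (n + 1) ^ n * R :=
    (splitCount_le n m).trans (Nat.mul_le_mul_left _ hR)
  have hR0 : 0 < R := Nat.pos_of_ne_zero (by rintro rfl; simp at h1; omega)
  have h2 : Real.logb 2 (splitCount n m) ≤ Real.logb 2 (2 * ((n : ℝ) + 1) ^ n * R) :=
    Real.logb_le_logb_of_le (by norm_num) (by exact_mod_cast hpos) (by exact_mod_cast h1)
  rw [Real.logb_mul (by positivity) (by positivity), Real.logb_mul (by positivity) (by positivity),
    Real.logb_pow, Real.logb_self_eq_one (by norm_num)] at h2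
  have := one_le_err hn
  linarith

open Filter Topology in
/-- The dense half of the theorem, along an arbitrary sequence of edge counts of density `c`. -/
theorem tendsto_splitCount {c : ℝ} (hc0 : 1 / 2 ≤ c) (hc1 : c < 1) {m : ℕ → ℕ}
    (hmN : ∀ n, m n ≤ n.choose 2)
    (hm : Tendsto (fun n : ℕ => (m n : ℝ) / (n.choose 2 : ℝ)) atTop (𝓝 c)) :
    Tendsto (fun n : ℕ => Real.logb 2 (splitCount n (m n)) / (n.choose 2 : ℝ)) atTop
      (𝓝 (hfun c)) := by
  -- `τ` is the fraction of the half outside `A` that becomes a clique, chosen so that the fraction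
  -- `p` of cross pairs still needed as edges is `1/2` if possible; for `c > 3/4` even `τ = 1` leaves
  -- `p = 2c - 1 > 1/2`.
  obtain ⟨τ, p, hτ0, hτ1, hp, hp0, hp1, hh⟩ : ∃ τ p : ℝ, 0 ≤ τ ∧ τ ≤ 1 ∧
      p = 2 * c - 1 / 2 - τ ^ 2 / 2 ∧ 0 < p ∧ p < 1 ∧ hfun c = 1 / 2 * binEnt p := by
    rcases le_or_gt c (3 / 4) with h | h
    · refine ⟨√(4 * c - 2), 1 / 2, Real.sqrt_nonneg _, ?_, ?_, by norm_num, by norm_num, ?_⟩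
      · rw [Real.sqrt_le_one]; linarith
      · rw [Real.sq_sqrt (by linarith)]; ring
      · rw [binEnt_half, hfun, if_neg (by linarith), if_pos h]; norm_num
    · refine ⟨1, 2 * c - 1, zero_le_one, le_rfl, by ring, by linarith, by linarith, ?_⟩
      rw [hfun, if_neg (by linarith), if_neg (by linarith)]; ring
  set Q : ℕ → ℕ := fun n => n / 2 * (n - n / 2) with hQ
  set t : ℕ → ℕ := fun n => ⌊τ * ((n - n / 2 : ℕ) : ℝ)⌋₊ with ht
  have htle : ∀ n, t n ≤ n - n / 2 := fun n =>
    Nat.floor_le_of_le (mul_le_of_le_one_left (Nat.cast_nonneg _) hτ1)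
  have hB : Tendsto (fun n : ℕ => ((n - n / 2 : ℕ) : ℝ)) atTop atTop := by
    refine tendsto_natCast_atTop_atTop.comp (tendsto_atTop.2 fun b => ?_)
    filter_upwards [eventually_ge_atTop (2 * b)] with n hn
    omega
  have htlim : Tendsto (fun n : ℕ => (t n : ℝ) / n) atTop (𝓝 (τ * (1 / 2))) := by
    refine (((tendsto_nat_floor_mul_div_atTop hτ0).comp hB).mul tendsto_half').congr' ?_
    filter_upwards [hB.eventually_gt_atTop 0] with n hn
    exact div_mul_div_cancel₀ hn.ne'
  have hN : ∀ᶠ n : ℕ in atTop, (0 : ℝ) < (n.choose 2 : ℝ) := by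
    filter_upwards [eventually_ge_atTop 2] with n hn
    exact_mod_cast Nat.choose_pos hn
  have hQpos : ∀ᶠ n : ℕ in atTop, 0 < Q n := by
    filter_upwards [eventually_ge_atTop 2] with n hn
    exact Nat.mul_pos (by omega) (by omega)
  have hQN : Tendsto (fun n : ℕ => (Q n : ℝ) / (n.choose 2 : ℝ)) atTop (𝓝 (1 / 2)) := by
    have := tendsto_div_of_sq (by norm_num) tendsto_quarter tendsto_total
    rwa [show (1 / 4 : ℝ) / (1 / 2) = 1 / 2 by norm_num] at this
  have hm2 : Tendsto (fun n : ℕ => (m n : ℝ) / (n : ℝ) ^ 2) atTop (𝓝 (c * (1 / 2))) := by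
    refine (hm.mul tendsto_total).congr' ?_
    filter_upwards [hN] with n hn
    exact div_mul_div_cancel₀ hn.ne'
  have hreal : Tendsto (fun n : ℕ =>
      ((m n : ℝ) - (((n / 2).choose 2 : ℝ) + ((t n).choose 2 : ℝ))) / (Q n : ℝ)) atTop (𝓝 p) := by
    have h := hm2.sub ((tendsto_choose_two tendsto_half).add (tendsto_choose_two htlim))
    have h' := tendsto_div_of_sq (x := fun n : ℕ =>
      (m n : ℝ) - (((n / 2).choose 2 : ℝ) + ((t n).choose 2 : ℝ))) (by norm_num)
      (h.congr fun n => by ring) tendsto_quarter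
    convert h' using 2
    rw [hp]; ring
  have hx : ∀ᶠ n : ℕ in atTop, (n / 2).choose 2 + (t n).choose 2 ≤ m n := by
    filter_upwards [hreal.eventually (lt_mem_nhds hp0), hQpos] with n h1 h2
    have h3 : (0 : ℝ) < Q n := by exact_mod_cast h2
    have h4 := (div_pos_iff_of_pos_right h3).1 h1
    have : (((n / 2).choose 2 + (t n).choose 2 : ℕ) : ℝ) ≤ (m n : ℝ) := by push_cast; linarith
    exact_mod_cast this
  have hratio : Tendsto (fun n : ℕ =>
      ((m n - ((n / 2).choose 2 + (t n).choose 2) : ℕ) : ℝ) / (Q n : ℝ)) atTop (𝓝 p) := by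
    refine hreal.congr' ?_
    filter_upwards [hx] with n h
    rw [Nat.cast_sub h, Nat.cast_add]
  have he : ∀ᶠ n : ℕ in atTop, m n - ((n / 2).choose 2 + (t n).choose 2) ≤ Q n := by
    filter_upwards [hratio.eventually (gt_mem_nhds hp1), hQpos] with n h1 h2
    have h3 : (0 : ℝ) < Q n := by exact_mod_cast h2
    have h4 := (div_lt_one h3).1 h1
    exact_mod_cast h4.le
  have hlow : ∀ᶠ n : ℕ in atTop, 0 < splitCount n (m n) ∧
      (Q n : ℝ) * binEnt (((m n - ((n / 2).choose 2 + (t n).choose 2) : ℕ) : ℝ) / (Q n : ℝ))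
        - 2 * (n * Real.logb 2 (n + 1)) ≤ Real.logb 2 (splitCount n (m n)) := by
    filter_upwards [hx, he, hQpos, eventually_gt_atTop 0] with n h1 h2 h3 h4
    exact le_logb_splitCount h4 (by have := htle n; omega) h1 h3 h2
  have hlowlim : Tendsto (fun n : ℕ => (Q n : ℝ) / (n.choose 2 : ℝ) *
      binEnt (((m n - ((n / 2).choose 2 + (t n).choose 2) : ℕ) : ℝ) / (Q n : ℝ))
        - 2 * (n * Real.logb 2 (n + 1) / (n.choose 2 : ℝ))) atTop (𝓝 (hfun c)) := by
    have := (hQN.mul ((continuous_binEnt.tendsto p).comp hratio)).sub (tendsto_err.const_mul 2)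
    rw [mul_zero, sub_zero, ← hh] at this
    exact this
  obtain ⟨U, hUlim, hU⟩ : ∃ U : ℕ → ℝ,
      Tendsto (fun n => U n / (n.choose 2 : ℝ)) atTop (𝓝 (hfun c)) ∧
      ∀ᶠ n : ℕ in atTop, Real.logb 2 (splitCount n (m n)) ≤ U n := by
    rcases le_or_gt c (3 / 4) with h | h
    · refine ⟨fun n => 2 * (n * Real.logb 2 (n + 1)) + Q n, ?_, ?_⟩
      · have := (tendsto_err.const_mul 2).add hQN
        rw [mul_zero, zero_add] at this
        rw [hfun, if_neg (by linarith), if_pos h]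
        refine this.congr fun n => ?_
        ring
      · filter_upwards [hlow, eventually_gt_atTop 0] with n h1 h2
        have := logb_splitCount_le_of_le h1.1 h2 (sum_choose_le_two_pow (Q n) (m n))
        push_cast at this
        rwa [Real.logb_pow, Real.logb_self_eq_one (by norm_num), mul_one] at this
    -- For `c > 3/4` the complements are counted: they have `C(n,2) - m` edges, fewer than half the
    -- number `Q` of cross pairs, so the binomial sum is dominated by its last term.
    · have hk : Tendsto (fun n : ℕ => ((n.choose 2 - m n : ℕ) : ℝ) / (Q n : ℝ)) atTop
          (𝓝 (1 - (2 * c - 1))) := by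
        have := tendsto_div_of_sq (x := fun n : ℕ => ((n.choose 2 - m n : ℕ) : ℝ)) (by norm_num)
          ((tendsto_total.sub hm2).congr fun n => by rw [Nat.cast_sub (hmN n)]; ring)
          tendsto_quarter
        convert this using 2
        ring
      have hk2 : ∀ᶠ n : ℕ in atTop, 2 * (n.choose 2 - m n) ≤ Q n := by
        filter_upwards [hk.eventually (gt_mem_nhds (show 1 - (2 * c - 1) < 1 / 2 by linarith)),
          hQpos] with n h1 h2
        have h3 : (0 : ℝ) < Q n := by exact_mod_cast h2
        rw [div_lt_iff₀ h3] at h1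
        have : ((2 * (n.choose 2 - m n) : ℕ) : ℝ) ≤ Q n := by push_cast; linarith
        exact_mod_cast this
      refine ⟨fun n => 4 * (n * Real.logb 2 (n + 1)) +
        Q n * binEnt (((n.choose 2 - m n : ℕ) : ℝ) / (Q n : ℝ)), ?_, ?_⟩
      · have := (tendsto_err.const_mul 4).add
          (hQN.mul ((continuous_binEnt.tendsto _).comp hk))
        rw [mul_zero, zero_add, binEnt_one_sub] at this
        rw [hfun, if_neg (by linarith), if_neg (by linarith), div_eq_mul_one_div, mul_comm]
        refine this.congr fun n => ?_
        simp only [Function.comp]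
        ring
      · filter_upwards [hlow, hk2, hQpos, eventually_gt_atTop 0] with n h1 h2 h3 h4
        have hpos := h1.1
        rw [← splitCount_compl (hmN n)] at hpos ⊢
        have a1 := logb_splitCount_le_of_le hpos h4 (sum_choose_le h2)
        have hc : 0 < (Q n).choose (n.choose 2 - m n) := Nat.choose_pos (by omega)
        push_cast at a1
        rw [Real.logb_mul (by positivity) (by positivity)] at a1
        have a2 := (logb_choose_bounds (M := Q n) (k := n.choose 2 - m n) (by omega) h3).1
        have a3 := logb_succ_le (x := n.choose 2 - m n) h4
          ((Nat.sub_le _ _).trans (Nat.choose_le_pow n 2))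
        linarith
  refine tendsto_of_tendsto_of_tendsto_of_le_of_le' hlowlim hUlim ?_ ?_
  · filter_upwards [hlow, hN] with n h1 h2
    rw [le_div_iff₀ h2]
    refine le_trans (le_of_eq ?_) h1.2
    field_simp
  · filter_upwards [hU, hN] with n h1 h2
    exact div_le_div_of_nonneg_right h1 h2.le

/-- For every `0 < c < 1`, `log₂|𝒮(n,c)| / C(n,2)` converges to `h(c)` as `n → ∞`. -/
theorem stmt2 (c : ℝ) (hc0 : 0 < c) (hc1 : c < 1) :
    Filter.Tendsto (fun n : ℕ => Real.logb 2 ((Sset n c).card : ℝ) / (n.choose 2 : ℝ))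
      Filter.atTop (nhds (hfun c)) := by
  have hS : ∀ n, (Sset n c).card = splitCount n ⌊c * (n.choose 2 : ℝ)⌋₊ := fun n => rfl
  simp only [hS]
  have hle : ∀ n : ℕ, ⌊c * (n.choose 2 : ℝ)⌋₊ ≤ n.choose 2 := fun n =>
    Nat.floor_le_of_le (mul_le_of_le_one_left (Nat.cast_nonneg _) hc1.le)
  have hNat : Filter.Tendsto (fun n : ℕ => (n.choose 2 : ℝ)) Filter.atTop Filter.atTop := by
    refine tendsto_natCast_atTop_atTop.comp (Filter.tendsto_atTop.2 fun b => ?_)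
    filter_upwards [Filter.eventually_ge_atTop (b + 1), Filter.eventually_ge_atTop 2] with n h1 h2
    rw [Nat.choose_two_right, Nat.le_div_iff_mul_le (by norm_num), mul_comm]
    exact Nat.mul_le_mul h2 (by omega)
  have hlim := (tendsto_nat_floor_mul_div_atTop hc0.le).comp hNat
  rcases le_or_gt (1 / 2) c with h | h
  · exact tendsto_splitCount h hc1 hle hlim
  · have key := tendsto_splitCount (c := 1 - c) (by linarith) (by linarith)
      (m := fun n => n.choose 2 - ⌊c * (n.choose 2 : ℝ)⌋₊) (fun n => Nat.sub_le _ _) (by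
        refine ((tendsto_const_nhds (x := (1 : ℝ))).sub hlim).congr' ?_
        filter_upwards [hNat.eventually_gt_atTop 0] with n hn
        rw [Nat.cast_sub (hle n), sub_div, div_self hn.ne']
        rfl)
    simp only [fun n => splitCount_compl (hle n)] at key
    rwa [hfun_one_sub] at key
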